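/- Let 1 ≤ p < 2. Let φ be a real-valued, non-constant, 2π-periodic function of class C^{1,ω}(𝕋). Then there exists a constant c = c(p, φ) > 0 such that for all real λ with |λ| ≥ 1, ‖e^{iλφ}‖_{A_p(𝕋)} ≥ c · |λ|^{1/p} · χ^{-1}(1/|λ|), where χ^{-1} is the inverse function of χ(δ) = δ·ω(δ). -/

import Mathlib

open MeasureTheory Real Set
open scoped ENNReal

/-- The k-th Fourier coefficient of a (2π-periodic) function on the circle,
identified with a function on [0, 2π]. -/
noncomputable def fourierCoef (f : ℝ → ℂ) (k : ℤ) : ℂ :=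
  (1 / (2 * (Real.pi : ℂ))) *
    ∫ t in (0:ℝ)..(2 * Real.pi), f t * Complex.exp (-Complex.I * (k : ℂ) * (t : ℂ))

/-- The A_p(𝕋) norm: ℓ^p norm of the sequence of Fourier coefficients
(valued in ℝ≥0∞ so that divergence gives ∞). -/
noncomputable def ApNorm (p : ℝ) (f : ℝ → ℂ) : ℝ≥0∞ :=
  (∑' k : ℤ, ((‖fourierCoef f k‖₊ : ℝ≥0∞) ^ p)) ^ (1 / p)

/-!
Put `f = exp(iλφ)`. Since `φ` is periodic and non-constant, `λφ'` takes every value in some interval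
`[0, M|λ|]`. If `λφ'(a) = n` is an integer of this interval, then the phase of `f(t) exp(-int)` is
stationary at `a`, and it varies by at most `1` on `|t - a| ≤ δ` as soon as
`|λ| * δ * ω(δ)` is small, that is for `δ` a small multiple of `χ⁻¹(1/|λ|)`. Multiplying `f` by a
tent of width `δ` centred at `a` therefore produces an `n`-th Fourier coefficient of size at least
`δ / (8π)`. Its modulus is at most the `n`-th entry of the convolution of `|f̂|` with the
coefficients of the tent, which are non-negative, have sum `1`, and do not depend on `a`. By Young's
inequality this convolution does not increase the `ℓ^p` norm, and summing over the at least `M|λ|`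
integers `n` in the interval gives the bound.
-/

/-- The triangular bump of height `1` supported on `[-δ, δ]`, which localises a function to an
interval of length `2 * δ`. -/
noncomputable def tent (δ t : ℝ) : ℝ := max 0 (1 - |t| / δ)

/-- The Fourier coefficients of the `2π`-periodic function equal to `tent δ` on `[-π, π]`, for
`0 < δ ≤ π`. Since `sinc 0 = 1`, the formula covers `n = 0`. -/
noncomputable def tentCoeff (δ : ℝ) (n : ℤ) : ℝ := δ / (2 * π) * sinc (n * δ / 2) ^ 2

-- The `n = 0` term is `1 / 0 = 0`, so the sum has mean value zero.
lemma hasSum_exp_div_sq_of_nonneg {t : ℝ} (ht : t ∈ Icc 0 (2 * π)) :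
    HasSum (fun n : ℤ => Complex.exp (Complex.I * n * t) / (n : ℂ) ^ 2)
      ((t ^ 2 / 2 - π * t + π ^ 2 / 3 : ℝ) : ℂ) := by
  have hx : t / (2 * π) ∈ Icc (0 : ℝ) 1 :=
    ⟨div_nonneg ht.1 two_pi_pos.le, (div_le_one two_pi_pos).2 ht.2⟩
  have hπ : (π : ℂ) ≠ 0 := Complex.ofReal_ne_zero.2 pi_ne_zero
  convert! hasSum_one_div_pow_mul_fourier_mul_bernoulliFun le_rfl hx using 1
  · funext n
    rw [fourier_coe_apply, one_div_mul_eq_div]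
    congr 2
    push_cast
    field_simp
  · rw [bernoulliFun_two, Nat.factorial_two]
    push_cast
    rw [mul_pow, Complex.I_sq]
    field_simp
    ring

lemma hasSum_exp_div_sq {t : ℝ} (ht : |t| ≤ 2 * π) :
    HasSum (fun n : ℤ => Complex.exp (Complex.I * n * t) / (n : ℂ) ^ 2)
      ((t ^ 2 / 2 - π * |t| + π ^ 2 / 3 : ℝ) : ℂ) := by
  have h := hasSum_exp_div_sq_of_nonneg ⟨abs_nonneg t, ht⟩
  rw [sq_abs] at h
  rcases abs_choice t with habs | habs
  · rwa [habs] at h ⊢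
  · rw [← (Equiv.neg ℤ).hasSum_iff]
    convert! h using 2 with n
    simp [habs]

section Tent

variable {δ t : ℝ}

lemma continuous_tent (δ : ℝ) : Continuous (tent δ) := by
  unfold tent; fun_prop

lemma tent_nonneg (δ t : ℝ) : 0 ≤ tent δ t := le_max_left _ _

lemma tent_zero_right (δ : ℝ) : tent δ 0 = 1 := by simp [tent]

lemma tent_eq_zero_of_le_abs (hδ : 0 < δ) (ht : δ ≤ |t|) : tent δ t = 0 :=
  max_eq_left (sub_nonpos.2 ((one_le_div hδ).2 ht))

lemma half_le_tent (hδ : 0 < δ) (ht : |t| ≤ δ / 2) : 1 / 2 ≤ tent δ t := by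
  have : |t| / δ ≤ 1 / 2 := (div_le_iff₀ hδ).2 (by linarith)
  exact le_max_of_le_right (by linarith)

lemma tent_eq_second_difference (hδ : 0 < δ) :
    tent δ t = (|t + δ| + |t - δ| - 2 * |t|) / (2 * δ) := by
  have hmax : tent δ t = max 0 (δ - |t|) / δ := by
    rw [tent, ← max_div_div_right hδ.le, zero_div, sub_div, div_self hδ.ne']
  rw [hmax, div_eq_div_iff hδ.ne' (by positivity)]
  suffices 2 * max 0 (δ - |t|) = |t + δ| + |t - δ| - 2 * |t| by rw [← this]; ring
  grind

lemma div_two_le_integral_tent (hδ : 0 < δ) (hδπ : δ ≤ π) :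
    δ / 2 ≤ ∫ t in (-π)..π, tent δ t := by
  have hint (u v : ℝ) : IntervalIntegrable (tent δ) volume u v :=
    (continuous_tent δ).intervalIntegrable u v
  calc δ / 2 = ∫ _ in (-(δ / 2))..(δ / 2), (1 / 2 : ℝ) := by
        rw [intervalIntegral.integral_const, smul_eq_mul]; ring
    _ ≤ ∫ t in (-(δ / 2))..(δ / 2), tent δ t :=
        intervalIntegral.integral_mono_on (by linarith) intervalIntegrable_const (hint _ _)
          fun t ht => half_le_tent hδ (abs_le.2 ht)
    _ ≤ ∫ t in (-π)..π, tent δ t :=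
        intervalIntegral.integral_mono_interval (by linarith) (by linarith) (by linarith)
          (.of_forall (tent_nonneg δ)) (hint _ _)

lemma tentCoeff_nonneg (hδ : 0 ≤ δ) (n : ℤ) : 0 ≤ tentCoeff δ n :=
  mul_nonneg (div_nonneg hδ two_pi_pos.le) (sq_nonneg _)

lemma tentCoeff_zero_right (δ : ℝ) : tentCoeff δ 0 = δ / (2 * π) := by simp [tentCoeff]

lemma tentCoeff_of_ne_zero (hδ : δ ≠ 0) {n : ℤ} (hn : n ≠ 0) :
    tentCoeff δ n = (1 - cos (n * δ)) / (π * δ * n ^ 2) := by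
  have hn' : (n : ℝ) ≠ 0 := Int.cast_ne_zero.2 hn
  rw [tentCoeff, sinc_of_ne_zero (by positivity), div_pow, sin_sq_eq_half_sub,
    mul_div_cancel₀ _ two_ne_zero]
  field_simp

lemma exp_second_difference (n : ℤ) (δ t : ℝ) :
    2 * Complex.exp (Complex.I * n * t) - Complex.exp (Complex.I * n * (t + δ : ℝ))
        - Complex.exp (Complex.I * n * (t - δ : ℝ))
      = 2 * (1 - cos (n * δ) : ℝ) * Complex.exp (Complex.I * n * t) := by
  have hadd : Complex.exp (Complex.I * n * (t + δ : ℝ)) =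
      Complex.exp (Complex.I * n * t) * Complex.exp (n * δ * Complex.I) := by
    rw [← Complex.exp_add]; push_cast; ring_nf
  have hsub : Complex.exp (Complex.I * n * (t - δ : ℝ)) =
      Complex.exp (Complex.I * n * t) * Complex.exp (-(n * δ) * Complex.I) := by
    rw [← Complex.exp_add]; push_cast; ring_nf
  rw [hadd, hsub]
  push_cast
  rw [Complex.cos]
  ring

lemma hasSum_tentCoeff_mul_exp (hδ : 0 < δ) (hδπ : δ ≤ π) (ht : |t| ≤ π) :
    HasSum (fun n : ℤ => (tentCoeff δ n : ℂ) * Complex.exp (Complex.I * n * t)) (tent δ t) := by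
  have hδt : |δ| ≤ π := by rwa [abs_of_pos hδ]
  have hcentre := hasSum_exp_div_sq (t := t) (by linarith)
  have hright := hasSum_exp_div_sq (t := t + δ) ((abs_add_le t δ).trans (by linarith))
  have hleft := hasSum_exp_div_sq (t := t - δ) ((abs_sub t δ).trans (by linarith))
  have hdiff := (((hcentre.mul_left 2).sub hright).sub hleft).mul_left (1 / (2 * π * δ) : ℂ)
  -- The second difference kills the mean value, which has to be put back at `n = 0`.
  have hmean : HasSum (fun n : ℤ => if n = 0 then ((δ / (2 * π) : ℝ) : ℂ) else 0)
      ((δ / (2 * π) : ℝ) : ℂ) := hasSum_ite_eq 0 _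
  convert! hdiff.add hmean using 1
  · funext n
    rcases eq_or_ne n 0 with rfl | hn
    · simp [tentCoeff_zero_right]
    · have hπ : (π : ℂ) ≠ 0 := Complex.ofReal_ne_zero.2 pi_ne_zero
      have hδ' : (δ : ℂ) ≠ 0 := Complex.ofReal_ne_zero.2 hδ.ne'
      have hn' : (n : ℂ) ≠ 0 := Int.cast_ne_zero.2 hn
      rw [if_neg hn, add_zero, mul_div_assoc', ← sub_div, ← sub_div, exp_second_difference,
        tentCoeff_of_ne_zero hδ.ne' hn]
      push_cast
      field_simp
  · rw [tent_eq_second_difference hδ]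
    norm_cast
    field_simp
    ring

lemma hasSum_tentCoeff (hδ : 0 < δ) (hδπ : δ ≤ π) : HasSum (tentCoeff δ) 1 := by
  have h := hasSum_tentCoeff_mul_exp (t := 0) hδ hδπ (by simpa using pi_pos.le)
  simp only [Complex.ofReal_zero, mul_zero, Complex.exp_zero, mul_one, tent_zero_right] at h
  exact Complex.hasSum_ofReal.1 h

lemma tsum_enorm_tentCoeff (hδ : 0 < δ) (hδπ : δ ≤ π) : ∑' n, ‖tentCoeff δ n‖ₑ = 1 := by
  have h := hasSum_tentCoeff hδ hδπ
  simp_rw [fun n => Real.enorm_of_nonneg (tentCoeff_nonneg hδ.le n)]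
  rw [← ENNReal.ofReal_tsum_of_nonneg (tentCoeff_nonneg hδ.le) h.summable, h.tsum_eq,
    ENNReal.ofReal_one]

end Tent

section Localisation

variable {f g : ℝ → ℂ}

lemma norm_exp_I_mul_int_mul (n : ℤ) (t : ℝ) : ‖Complex.exp (Complex.I * n * t)‖ = 1 := by
  simp [Complex.norm_exp]

lemma norm_exp_neg_I_mul_int_mul (n : ℤ) (t : ℝ) : ‖Complex.exp (-Complex.I * n * t)‖ = 1 := by
  simp [Complex.norm_exp]

lemma periodic_exp_neg_I_mul_int_mul (n : ℤ) :
    Function.Periodic (fun t : ℝ => Complex.exp (-Complex.I * n * t)) (2 * π) := fun t =>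
  Complex.exp_eq_exp_iff_exists_int.2 ⟨-n, by push_cast; ring⟩

lemma integral_mul_exp_eq_fourierCoef (hper : Function.Periodic f (2 * π)) (n : ℤ) (a : ℝ) :
    ∫ t in (a - π)..(a + π), f t * Complex.exp (-Complex.I * n * t) =
      2 * π * fourierCoef f n := by
  have h := (hper.mul (periodic_exp_neg_I_mul_int_mul n)).intervalIntegral_add_eq (a - π) 0
  simp only [Pi.mul_apply, zero_add, show a - π + 2 * π = a + π by ring] at h
  have hπ : (π : ℂ) ≠ 0 := Complex.ofReal_ne_zero.2 pi_ne_zero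
  rw [h, fourierCoef]
  field_simp

lemma hasSum_fourierCoef_sub (hper : Function.Periodic f (2 * π)) {a : ℝ}
    (hf : IntervalIntegrable f volume (a - π) (a + π)) {c : ℤ → ℂ} (hc : Summable c)
    (hg : ∀ t : ℝ, |t| ≤ π → HasSum (fun j : ℤ => c j * Complex.exp (Complex.I * j * t)) (g t))
    (n : ℤ) :
    HasSum (fun j : ℤ => c j * Complex.exp (-Complex.I * j * a) * (2 * π * fourierCoef f (n - j)))
      (∫ t in (a - π)..(a + π), f t * Complex.exp (-Complex.I * n * t) * g (t - a)) := by
  have hshift (j : ℤ) (t : ℝ) :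
      Complex.exp (-Complex.I * n * t) * Complex.exp (Complex.I * j * (t - a : ℝ)) =
        Complex.exp (-Complex.I * j * a) * Complex.exp (-Complex.I * (n - j : ℤ) * t) := by
    rw [← Complex.exp_add, ← Complex.exp_add]; push_cast; ring_nf
  have hterm (j : ℤ) : c j * Complex.exp (-Complex.I * j * a) * (2 * π * fourierCoef f (n - j)) =
      ∫ t in (a - π)..(a + π), f t * Complex.exp (-Complex.I * n * t) *
        (c j * Complex.exp (Complex.I * j * (t - a : ℝ))) := by
    rw [← integral_mul_exp_eq_fourierCoef hper (n - j) a, ← intervalIntegral.integral_const_mul]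
    congr 1 with t
    linear_combination -(c j * f t) * hshift j t
  simp_rw [hterm]
  refine intervalIntegral.hasSum_integral_of_dominated_convergence (fun j t => ‖f t‖ * ‖c j‖)
    (fun j => ?_) (fun j => .of_forall fun t _ => ?_) (.of_forall fun t _ => ?_) ?_
    (.of_forall fun t ht => ?_)
  · exact (hf.aestronglyMeasurable_restrict_uIoc.mul (by fun_prop)).mul (by fun_prop)
  · simp only [norm_mul, norm_exp_I_mul_int_mul, norm_exp_neg_I_mul_int_mul, mul_one, le_refl]
  · exact hc.norm.mul_left _
  · simpa only [tsum_mul_left] using hf.norm.mul_const _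
  · rw [uIoc_of_le (by linarith [pi_pos])] at ht
    exact (hg _ (abs_le.2 ⟨by linarith [ht.1], by linarith [ht.2]⟩)).mul_left _

lemma enorm_complex_ofReal (r : ℝ) : ‖(r : ℂ)‖ₑ = ‖r‖ₑ := by
  rw [← ofReal_norm, ← ofReal_norm, Complex.norm_real]

lemma enorm_integral_mul_exp_mul_le (hper : Function.Periodic f (2 * π)) {a : ℝ}
    (hf : IntervalIntegrable f volume (a - π) (a + π)) {c : ℤ → ℂ} (hc : Summable c)
    (hg : ∀ t : ℝ, |t| ≤ π → HasSum (fun j : ℤ => c j * Complex.exp (Complex.I * j * t)) (g t))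
    (n : ℤ) :
    ‖∫ t in (a - π)..(a + π), f t * Complex.exp (-Complex.I * n * t) * g (t - a)‖ₑ ≤
      ENNReal.ofReal (2 * π) * ∑' j, ‖c j‖ₑ * ‖fourierCoef f (n - j)‖ₑ := by
  have hunit (j : ℤ) : ‖Complex.exp (-Complex.I * j * a)‖ₑ = 1 := by
    rw [← ofReal_norm, norm_exp_neg_I_mul_int_mul, ENNReal.ofReal_one]
  have htwoπ : ‖(2 * π : ℂ)‖ₑ = ENNReal.ofReal (2 * π) := by
    rw [← Real.enorm_of_nonneg two_pi_pos.le, ← enorm_complex_ofReal]; push_cast; rfl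
  rw [← (hasSum_fourierCoef_sub hper hf hc hg n).tsum_eq, ← ENNReal.tsum_mul_left]
  refine enorm_tsum_le_tsum_enorm.trans_eq (tsum_congr fun j => ?_)
  rw [enorm_mul, enorm_mul, enorm_mul, hunit, htwoπ]
  ring

lemma integral_cos_mul_le_norm_integral_exp_mul {ψ h : ℝ → ℝ} (hψ : Continuous ψ)
    (hh : Continuous h) (θ u v : ℝ) :
    ∫ t in u..v, cos (ψ t - θ) * h t ≤ ‖∫ t in u..v, Complex.exp (Complex.I * ψ t) * h t‖ := by
  have hre (t : ℝ) : (Complex.exp (-Complex.I * θ) * (Complex.exp (Complex.I * ψ t) * h t)).re =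
      cos (ψ t - θ) * h t := by
    rw [← mul_assoc, ← Complex.exp_add, Complex.re_mul_ofReal, ← Complex.exp_ofReal_mul_I_re]
    push_cast; ring_nf
  have hint : IntervalIntegrable
      (fun t => Complex.exp (-Complex.I * θ) * (Complex.exp (Complex.I * ψ t) * h t))
      volume u v := Continuous.intervalIntegrable (by fun_prop) u v
  calc ∫ t in u..v, cos (ψ t - θ) * h t
      = (∫ t in u..v, Complex.exp (-Complex.I * θ) * (Complex.exp (Complex.I * ψ t) * h t)).re := by
        simpa only [Complex.reCLM_apply, hre] using
          Complex.reCLM.intervalIntegral_comp_comm hint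
    _ ≤ ‖∫ t in u..v, Complex.exp (-Complex.I * θ) * (Complex.exp (Complex.I * ψ t) * h t)‖ :=
        Complex.re_le_norm _
    _ = ‖∫ t in u..v, Complex.exp (Complex.I * ψ t) * h t‖ := by
        rw [intervalIntegral.integral_const_mul, norm_mul, Complex.norm_exp]
        simp

lemma half_le_cos_of_abs_le_one {x : ℝ} (hx : |x| ≤ 1) : 1 / 2 ≤ cos x := by
  linarith [one_sub_sq_div_two_le_cos (x := x), (sq_le_one_iff_abs_le_one x).2 hx]

lemma div_four_le_norm_integral_exp_mul_tent {ψ : ℝ → ℝ} (hψ : Continuous ψ) {δ a : ℝ}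
    (hδ : 0 < δ) (hδπ : δ ≤ π) (hosc : ∀ t, |t - a| ≤ δ → |ψ t - ψ a| ≤ 1) :
    δ / 4 ≤ ‖∫ t in (a - π)..(a + π), Complex.exp (Complex.I * ψ t) * tent δ (t - a)‖ := by
  have htent : Continuous fun t => tent δ (t - a) := (continuous_tent δ).comp (by fun_prop)
  have hle (t : ℝ) : 1 / 2 * tent δ (t - a) ≤ cos (ψ t - ψ a) * tent δ (t - a) := by
    rcases le_total |t - a| δ with ht | ht
    · exact mul_le_mul_of_nonneg_right (half_le_cos_of_abs_le_one (hosc t ht)) (tent_nonneg _ _)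
    · simp only [tent_eq_zero_of_le_abs hδ ht, mul_zero, le_refl]
  calc δ / 4 ≤ 1 / 2 * ∫ t in (-π)..π, tent δ t := by linarith [div_two_le_integral_tent hδ hδπ]
    _ = ∫ t in (a - π)..(a + π), 1 / 2 * tent δ (t - a) := by
        rw [intervalIntegral.integral_const_mul,
          intervalIntegral.integral_comp_sub_right (tent δ) a]
        ring_nf
    _ ≤ ∫ t in (a - π)..(a + π), cos (ψ t - ψ a) * tent δ (t - a) :=
        intervalIntegral.integral_mono_on (by linarith [pi_pos])
          (Continuous.intervalIntegrable (by fun_prop) _ _)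
          (Continuous.intervalIntegrable (by fun_prop) _ _) fun t _ => hle t
    _ ≤ _ := integral_cos_mul_le_norm_integral_exp_mul hψ htent (ψ a) _ _

lemma ofReal_le_tsum_tentCoeff_mul_fourierCoef {ψ : ℝ → ℝ} (hψ : Continuous ψ)
    (hper : Function.Periodic (fun t => Complex.exp (Complex.I * ψ t)) (2 * π)) {δ a : ℝ}
    (hδ : 0 < δ) (hδπ : δ ≤ π) (n : ℤ)
    (hosc : ∀ t, |t - a| ≤ δ → |ψ t - ψ a - n * (t - a)| ≤ 1) :
    ENNReal.ofReal (δ / (8 * π)) ≤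
      ∑' j, ‖tentCoeff δ j‖ₑ * ‖fourierCoef (fun t => Complex.exp (Complex.I * ψ t)) (n - j)‖ₑ := by
  have hlower := div_four_le_norm_integral_exp_mul_tent (ψ := fun t => ψ t - n * t) (by fun_prop)
    hδ hδπ fun t ht => by convert hosc t ht using 2; ring
  have hphase (t : ℝ) : Complex.exp (Complex.I * (ψ t - n * t : ℝ)) =
      Complex.exp (Complex.I * ψ t) * Complex.exp (-Complex.I * n * t) := by
    rw [← Complex.exp_add]; push_cast; ring_nf
  simp only [hphase] at hlower
  have hupper := enorm_integral_mul_exp_mul_le hper (a := a)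
    (Continuous.intervalIntegrable (by fun_prop) _ _)
    (Complex.hasSum_ofReal.2 (hasSum_tentCoeff hδ hδπ)).summable
    (fun t ht => hasSum_tentCoeff_mul_exp hδ hδπ ht) n
  simp only [enorm_complex_ofReal] at hupper
  have hscaled := (ENNReal.ofReal_le_ofReal hlower).trans ((ofReal_norm _).trans_le hupper)
  rw [show δ / 4 = 2 * π * (δ / (8 * π)) by field_simp; ring, ENNReal.ofReal_mul two_pi_pos.le]
    at hscaled
  exact (ENNReal.mul_le_mul_iff_right (by simp [pi_pos]) ENNReal.ofReal_ne_top).1 hscaled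

end Localisation

section Young

variable {p : ℝ}

lemma rpow_tsum_mul_le {ι : Type*} (hp : 1 ≤ p) (w x : ι → ℝ≥0∞) :
    (∑' i, w i * x i) ^ p ≤ (∑' i, w i) ^ (p - 1) * ∑' i, w i * x i ^ p := by
  have hp0 : 0 < p := by linarith
  have hp' : 0 ≤ 1 - p⁻¹ := sub_nonneg.2 (inv_le_one_of_one_le₀ hp)
  have hholder : ∑' i, w i * x i ≤ (∑' i, w i) ^ (1 - p⁻¹) * (∑' i, w i * x i ^ p) ^ p⁻¹ := by
    refine ENNReal.summable.tsum_le_of_sum_le fun s => ?_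
    refine (ENNReal.inner_le_weight_mul_Lp_of_nonneg s hp w x).trans ?_
    gcongr <;> exact ENNReal.sum_le_tsum s
  calc (∑' i, w i * x i) ^ p
      ≤ ((∑' i, w i) ^ (1 - p⁻¹) * (∑' i, w i * x i ^ p) ^ p⁻¹) ^ p := by gcongr
    _ = _ := by
      rw [ENNReal.mul_rpow_of_nonneg _ _ hp0.le, ← ENNReal.rpow_mul, ENNReal.rpow_inv_rpow hp0.ne',
        sub_mul, one_mul, inv_mul_cancel₀ hp0.ne']

lemma tsum_rpow_conv_le {G : Type*} [AddGroup G] (hp : 1 ≤ p) (w x : G → ℝ≥0∞) :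
    ∑' n, (∑' j, w j * x (n - j)) ^ p ≤ (∑' j, w j) ^ p * ∑' n, x n ^ p := by
  calc ∑' n, (∑' j, w j * x (n - j)) ^ p
      ≤ ∑' n, (∑' j, w j) ^ (p - 1) * ∑' j, w j * x (n - j) ^ p :=
        ENNReal.tsum_le_tsum fun n => rpow_tsum_mul_le hp w fun j => x (n - j)
    _ = (∑' j, w j) ^ (p - 1) * ∑' j, w j * ∑' n, x (n - j) ^ p := by
        simp only [ENNReal.tsum_mul_left]
        rw [ENNReal.tsum_comm]
        simp only [ENNReal.tsum_mul_left]
    _ = (∑' j, w j) ^ (p - 1) * ∑' j, w j * ∑' n, x n ^ p := by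
        congr! 4 with j
        exact (Equiv.subRight j).tsum_eq fun n => x n ^ p
    _ = (∑' j, w j) ^ p * ∑' n, x n ^ p := by
        rw [ENNReal.tsum_mul_right, ← mul_assoc]
        nth_rw 2 [← ENNReal.rpow_one (∑' j, w j)]
        rw [← ENNReal.rpow_add_of_nonneg _ _ (sub_nonneg.2 hp) zero_le_one, sub_add_cancel]

end Young

lemma ofReal_mul_le_tsum_int {y : ℤ → ℝ≥0∞} {ε : ℝ≥0∞} {L : ℝ}
    (hy : ∀ n : ℤ, (n : ℝ) ∈ Icc 0 L → ε ≤ y n) : ENNReal.ofReal L * ε ≤ ∑' n, y n := by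
  have hcard : L ≤ (Finset.Icc 0 ⌊L⌋).card := by
    rw [Int.card_Icc, sub_zero]
    calc L ≤ ((⌊L⌋ + 1 : ℤ) : ℝ) := by push_cast; exact (Int.lt_floor_add_one L).le
      _ ≤ ((⌊L⌋ + 1).toNat : ℝ) := by exact_mod_cast Int.self_le_toNat _
  calc ENNReal.ofReal L * ε ≤ (Finset.Icc 0 ⌊L⌋).card * ε := by
        gcongr; exact (ENNReal.ofReal_le_ofReal hcard).trans_eq (ENNReal.ofReal_natCast _)
    _ = ∑ _n ∈ Finset.Icc 0 ⌊L⌋, ε := by rw [Finset.sum_const, nsmul_eq_mul]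
    _ ≤ ∑ n ∈ Finset.Icc 0 ⌊L⌋, y n := Finset.sum_le_sum fun n hn => by
        obtain ⟨hn0, hnL⟩ := Finset.mem_Icc.1 hn
        exact hy n ⟨Int.cast_nonneg hn0, Int.le_floor.1 hnL⟩
    _ ≤ ∑' n, y n := ENNReal.sum_le_tsum _

section Phase

variable {ψ : ℝ → ℝ}

lemma abs_sub_sub_deriv_mul_le (hψ : Differentiable ℝ ψ) {a δ B : ℝ}
    (hB : ∀ s, |s - a| ≤ δ → |deriv ψ s - deriv ψ a| ≤ B) {t : ℝ} (ht : |t - a| ≤ δ) :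
    |ψ t - ψ a - deriv ψ a * (t - a)| ≤ B * |t - a| := by
  have hδ : 0 ≤ δ := (abs_nonneg _).trans ht
  have hderiv (s : ℝ) :
      HasDerivAt (fun s => ψ s - deriv ψ a * s) (deriv ψ s - deriv ψ a) s := by
    simpa using (hψ s).hasDerivAt.fun_sub ((hasDerivAt_id s).const_mul (deriv ψ a))
  have h := (convex_closedBall a δ).norm_image_sub_le_of_norm_hasDerivWithin_le
    (fun s _ => (hderiv s).hasDerivWithinAt) (fun s hs => hB s hs)
    (Metric.mem_closedBall_self hδ) (show t ∈ Metric.closedBall a δ from ht)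
  simp only [Real.norm_eq_abs] at h
  convert h using 2
  ring

lemma ofReal_rpow_mul_le_ApNorm_exp (hψ : Differentiable ℝ ψ)
    (hper : Function.Periodic (fun t => Complex.exp (Complex.I * ψ t)) (2 * π)) {p δ L : ℝ}
    (hp : 1 ≤ p) (hL : 0 ≤ L) (hδ : 0 < δ) (hδπ : δ ≤ π)
    (hosc : ∀ s t, |s - t| ≤ δ → δ * |deriv ψ s - deriv ψ t| ≤ 1)
    (hrange : Icc 0 L ⊆ range (deriv ψ)) :
    ENNReal.ofReal (L ^ (1 / p) * (δ / (8 * π))) ≤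
      ApNorm p fun t => Complex.exp (Complex.I * ψ t) := by
  have hp0 : 0 < p := by linarith
  set x : ℤ → ℝ≥0∞ := fun k => ‖fourierCoef (fun t => Complex.exp (Complex.I * ψ t)) k‖ₑ
  have hfreq (n : ℤ) (hn : (n : ℝ) ∈ Icc 0 L) :
      ENNReal.ofReal (δ / (8 * π)) ≤ ∑' j, ‖tentCoeff δ j‖ₑ * x (n - j) := by
    obtain ⟨a, ha⟩ := hrange hn
    refine ofReal_le_tsum_tentCoeff_mul_fourierCoef hψ.continuous hper (a := a) hδ hδπ n
      fun t ht => ?_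
    calc |ψ t - ψ a - n * (t - a)| ≤ 1 / δ * |t - a| := by
          rw [← ha]
          exact abs_sub_sub_deriv_mul_le hψ
            (fun s hs => (le_div_iff₀' hδ).2 (hosc s a hs)) ht
      _ ≤ 1 / δ * δ := by gcongr
      _ = 1 := one_div_mul_cancel hδ.ne'
  have hsum : ENNReal.ofReal L * ENNReal.ofReal (δ / (8 * π)) ^ p ≤ ∑' n, x n ^ p :=
    calc ENNReal.ofReal L * ENNReal.ofReal (δ / (8 * π)) ^ p
        ≤ ∑' n : ℤ, (∑' j, ‖tentCoeff δ j‖ₑ * x (n - j)) ^ p :=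
          ofReal_mul_le_tsum_int fun n hn => ENNReal.rpow_le_rpow (hfreq n hn) hp0.le
      _ ≤ (∑' j, ‖tentCoeff δ j‖ₑ) ^ p * ∑' n, x n ^ p := tsum_rpow_conv_le hp _ _
      _ = ∑' n, x n ^ p := by rw [tsum_enorm_tentCoeff hδ hδπ, ENNReal.one_rpow, one_mul]
  calc ENNReal.ofReal (L ^ (1 / p) * (δ / (8 * π)))
      = (ENNReal.ofReal L * ENNReal.ofReal (δ / (8 * π)) ^ p) ^ (1 / p) := by
        rw [ENNReal.mul_rpow_of_nonneg _ _ (by positivity), one_div, ENNReal.rpow_rpow_inv hp0.ne',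
          ENNReal.ofReal_rpow_of_nonneg hL (by positivity), ← ENNReal.ofReal_mul (by positivity)]
    _ ≤ (∑' n, x n ^ p) ^ (1 / p) := ENNReal.rpow_le_rpow hsum (by positivity)

end Phase

section Periodic

variable {φ : ℝ → ℝ} {c : ℝ}

lemma exists_deriv_pos_of_periodic (hφ : Differentiable ℝ φ) (hper : Function.Periodic φ c)
    (hc : 0 < c) (hne : ∃ s t, φ s ≠ φ t) : ∃ x, 0 < deriv φ x := by
  obtain ⟨s, t, hst⟩ : ∃ s t, φ s < φ t := by
    obtain ⟨s, t, h⟩ := hne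
    exact h.lt_or_gt.elim (fun h => ⟨s, t, h⟩) fun h => ⟨t, s, h⟩
  obtain ⟨m, hm⟩ := exists_nat_gt ((s - t) / c)
  have hlt : s < t + m * c := by linarith [(div_lt_iff₀ hc).1 hm]
  obtain ⟨x, -, hx⟩ := exists_deriv_eq_slope φ hlt hφ.continuous.continuousOn hφ.differentiableOn
  refine ⟨x, hx ▸ div_pos ?_ (sub_pos.2 hlt)⟩
  rw [hper.nat_mul m t]
  exact sub_pos.2 hst

lemma exists_Icc_subset_range_deriv_of_periodic (hφ : Differentiable ℝ φ)
    (hper : Function.Periodic φ c) (hc : 0 < c) (hne : ∃ s t, φ s ≠ φ t) :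
    ∃ M, 0 < M ∧ Icc (-M) M ⊆ range (deriv φ) := by
  obtain ⟨x, hx⟩ := exists_deriv_pos_of_periodic hφ hper hc hne
  obtain ⟨y, hy⟩ := exists_deriv_pos_of_periodic hφ.neg (fun t => congrArg (- ·) (hper t)) hc
    (hne.imp fun s => Exists.imp fun t => neg_injective.ne)
  rw [deriv.neg] at hy
  have hdarboux : OrdConnected (range (deriv φ)) :=
    image_univ ▸ ordConnected_univ.image_deriv fun t _ => hφ t
  refine ⟨min (deriv φ x) (-deriv φ y), lt_min hx hy, fun v hv => ?_⟩
  exact hdarboux.out (mem_range_self y) (mem_range_self x)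
    ⟨(le_neg_of_le_neg (min_le_right _ _)).trans hv.1, hv.2.trans (min_le_left _ _)⟩

end Periodic

lemma Icc_subset_range_const_mul {α : Type*} {g : α → ℝ} {M r : ℝ} (hr : r ≠ 0)
    (hM : Icc (-M) M ⊆ range g) :
    Icc (-(M * |r|)) (M * |r|) ⊆ range fun t => r * g t := fun v hv => by
  have hvr : |v / r| ≤ M := by
    rw [abs_div, div_le_iff₀ (abs_pos.2 hr)]
    exact abs_le.2 hv
  obtain ⟨a, ha⟩ := hM (abs_le.1 hvr)
  exact ⟨a, by simp only [ha, mul_div_cancel₀ v hr]⟩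

section Modulus

variable {ω χinv : ℝ → ℝ}

lemma le_of_mul_apply_le_mul_apply (hω : MonotoneOn ω (Ici 0)) {a b : ℝ} (ha : 0 ≤ a) (hb : 0 ≤ b)
    (hpos : 0 < b * ω b) (h : a * ω a ≤ b * ω b) : a ≤ b := by
  by_contra! hba
  have hωb : 0 < ω b := pos_of_mul_pos_right hpos hb
  refine h.not_gt ?_
  calc b * ω b < a * ω b := by gcongr
    _ ≤ a * ω a := mul_le_mul_of_nonneg_left (hω hb ha hba.le) ha

lemma exists_pos_forall_oscillation_le (hω : MonotoneOn ω (Ici 0))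
    (hχinv : ∀ y, 0 < y → 0 ≤ χinv y ∧ χinv y * ω (χinv y) = y) {u : ℝ → ℝ} {C R : ℝ}
    (hC : 0 < C) (hR : 0 < R) (hu : ∀ s t, |u s - u t| ≤ C * ω |s - t|) :
    ∃ κ, 0 < κ ∧ ∀ Λ, 1 ≤ Λ → 0 < κ * χinv (1 / Λ) ∧ κ * χinv (1 / Λ) ≤ R ∧
      ∀ s t, |s - t| ≤ κ * χinv (1 / Λ) → κ * χinv (1 / Λ) * (Λ * |u s - u t|) ≤ 1 := by
  have hχinv_pos {y : ℝ} (hy : 0 < y) : 0 < χinv y := by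
    obtain ⟨hnonneg, hmul⟩ := hχinv y hy
    exact hnonneg.lt_of_ne' (left_ne_zero_of_mul (hmul.trans_ne hy.ne'))
  have hD : 0 < χinv 1 := hχinv_pos one_pos
  refine ⟨min 1 (min (1 / C) (R / χinv 1)), by positivity, fun Λ hΛ => ?_⟩
  set κ := min 1 (min (1 / C) (R / χinv 1))
  have hκ : 0 < κ := by positivity
  have hκ1 : κ ≤ 1 := min_le_left _ _
  have hκC : κ * C ≤ 1 := (le_div_iff₀ hC).1 ((min_le_right _ _).trans (min_le_left _ _))
  have hκR : κ * χinv 1 ≤ R := (le_div_iff₀ hD).1 ((min_le_right _ _).trans (min_le_right _ _))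
  have hΛ0 : 0 < Λ := one_pos.trans_le hΛ
  have hd : 0 < χinv (1 / Λ) := hχinv_pos (by positivity)
  have hχd : χinv (1 / Λ) * ω (χinv (1 / Λ)) = 1 / Λ := (hχinv _ (by positivity)).2
  have hdD : χinv (1 / Λ) ≤ χinv 1 := by
    refine le_of_mul_apply_le_mul_apply hω hd.le hD.le ?_ ?_ <;> rw [(hχinv 1 one_pos).2]
    · exact one_pos
    · exact hχd.trans_le (div_le_self zero_le_one hΛ)
  set d := χinv (1 / Λ)
  refine ⟨mul_pos hκ hd, (by gcongr : κ * d ≤ κ * χinv 1).trans hκR, fun s t hst => ?_⟩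
  have hωst : ω |s - t| ≤ ω d :=
    hω (mem_Ici.2 (abs_nonneg _)) hd.le (hst.trans (mul_le_of_le_one_left hd.le hκ1))
  calc κ * d * (Λ * |u s - u t|) ≤ κ * d * (Λ * (C * ω d)) := by
        gcongr; exact (hu s t).trans (by gcongr)
    _ = κ * C * (Λ * (d * ω d)) := by ring
    _ = κ * C := by rw [hχd, mul_one_div_cancel hΛ0.ne', mul_one]
    _ ≤ 1 := hκC

end Modulus

theorem statement0_general {p : ℝ} (hp : 1 ≤ p) {ω χinv φ : ℝ → ℝ} (hω : MonotoneOn ω (Ici 0))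
    (hχinv : ∀ y, 0 < y → 0 ≤ χinv y ∧ χinv y * ω (χinv y) = y)
    (hper : Function.Periodic φ (2 * π)) (hφ : Differentiable ℝ φ)
    (hlip : ∃ C, 0 < C ∧ ∀ s t, |deriv φ s - deriv φ t| ≤ C * ω |s - t|)
    (hne : ∃ s t, φ s ≠ φ t) :
    ∃ c, 0 < c ∧ ∀ lam : ℝ, 1 ≤ |lam| →
      ENNReal.ofReal (c * |lam| ^ (1 / p) * χinv (1 / |lam|)) ≤
        ApNorm p fun t => Complex.exp (Complex.I * lam * φ t) := by
  obtain ⟨C, hC, hlip⟩ := hlip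
  obtain ⟨M, hM, hrange⟩ := exists_Icc_subset_range_deriv_of_periodic hφ hper two_pi_pos hne
  obtain ⟨κ, hκ, hscale⟩ := exists_pos_forall_oscillation_le hω hχinv hC pi_pos hlip
  refine ⟨M ^ (1 / p) * (κ / (8 * π)), by positivity, fun lam hlam => ?_⟩
  obtain ⟨hδ, hδπ, hosc⟩ := hscale |lam| hlam
  have hlam0 : lam ≠ 0 := abs_pos.1 (one_pos.trans_le hlam)
  have hderiv : deriv (fun t => lam * φ t) = fun t => lam * deriv φ t :=
    funext fun t => deriv_const_mul lam (hφ t)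
  have hbound := ofReal_rpow_mul_le_ApNorm_exp (ψ := fun t => lam * φ t) (L := M * |lam|)
    (hφ.const_mul lam) (fun t => by simp only [hper t]) hp (by positivity) hδ hδπ
    (by simpa only [hderiv, ← mul_sub, abs_mul] using hosc)
    (hderiv ▸ (Icc_subset_Icc_left (neg_nonpos.2 (by positivity))).trans
      (Icc_subset_range_const_mul hlam0 hrange))
  simp only [Complex.ofReal_mul, ← mul_assoc] at hbound
  convert hbound using 2
  rw [mul_rpow hM.le (abs_nonneg lam)]
  ring

/-- Theorem 1: lower bound for ‖e^{iλφ}‖_{A_p} for a non-constant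
real φ ∈ C^{1,ω}(𝕋), 1 ≤ p < 2. -/
theorem statement0
    (p : ℝ) (hp1 : 1 ≤ p) (hp2 : p < 2)
    -- ω is a modulus of continuity: continuous non-decreasing on [0,∞), ω(0)=0, ω(δ)>0 for δ>0,
    -- with χ(δ) = δ·ω(δ) strictly increasing and unbounded, and χinv its inverse.
    (ω : ℝ → ℝ)
    (hω_cont : ContinuousOn ω (Ici 0)) (hω_mono : MonotoneOn ω (Ici 0))
    (hω_zero : ω 0 = 0) (hω_pos : ∀ δ : ℝ, 0 < δ → 0 < ω δ)
    (hχ_mono : StrictMonoOn (fun δ => δ * ω δ) (Ici 0))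
    (hχ_unbdd : ∀ y : ℝ, ∃ δ : ℝ, 0 ≤ δ ∧ y < δ * ω δ)
    (χinv : ℝ → ℝ)
    (hχinv_left : ∀ δ : ℝ, 0 ≤ δ → χinv (δ * ω δ) = δ)
    (hχinv_right : ∀ y : ℝ, 0 ≤ y → 0 ≤ χinv y ∧ χinv y * ω (χinv y) = y)
    (φ : ℝ → ℝ)
    (hφ_per : ∀ t : ℝ, φ (t + 2 * Real.pi) = φ t)
    (hφ_C1 : ContDiff ℝ 1 φ)
    (hφ_lip : ∃ C : ℝ, 0 < C ∧ ∀ s t : ℝ, |deriv φ s - deriv φ t| ≤ C * ω |s - t|)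
    (hφ_nonconst : ∃ s t : ℝ, φ s ≠ φ t) :
    ∃ c : ℝ, 0 < c ∧ ∀ lam : ℝ, 1 ≤ |lam| →
      ENNReal.ofReal (c * |lam| ^ (1 / p) * χinv (1 / |lam|)) ≤
        ApNorm p (fun t => Complex.exp (Complex.I * (lam : ℂ) * (φ t : ℂ))) := by
  exact statement0_general hp1 hω_mono (fun y hy => hχinv_right y hy.le) hφ_per
    (hφ_C1.differentiable one_ne_zero) hφ_lip hφ_nonconst
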